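/- Let A be a positive self-adjoint operator on L²(X,μ) with L(t) = ‖e^{-tA}Π_V‖_{1,∞} finite for V = L²(X)∩(ker A)^⊥ and M(t) = ∫_t^∞ L(u) du < ∞. Then every nonzero f ∈ V of finite energy E(f) satisfies ∫_X N(|f(x)|²/(4E(f))) dμ ≤ ln 2, where N(y) = y / M^{-1}(y) and M^{-1}(y) = inf{t : M(t) ≤ y}. -/

import Mathlib

open MeasureTheory Set
open scoped ENNReal InnerProductSpace

variable {X : Type*} [MeasurableSpace X]

/-- The `L¹ → L^∞` operator norm of an operator on `L²`, computed on `L¹ ∩ L²`. -/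
noncomputable def opNorm1infty (μ : Measure X) (T : Lp ℝ 2 μ →L[ℝ] Lp ℝ 2 μ) : ℝ≥0∞ :=
  ⨆ (f : Lp ℝ 2 μ) (_ : eLpNorm (⇑f) 1 μ ≤ 1), eLpNorm (⇑(T f)) ⊤ μ

/-!
Write `y = f ^ 2 / (4 E)`. Since `M⁻¹ y` is the left end of the half-line `{t > 0 | M t ≤ y}`,
`1 / M⁻¹ y` is at most the integral of `t⁻²` over that half-line. Tonelli's theorem with respect to
the finite measure `f ^ 2 dμ` therefore bounds `∫ N(y) dμ` by `(4 E)⁻¹` times the integral over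
`t > 0` of `t⁻² ∫ 1_{M t ≤ y} f ^ 2 dμ`.

The semigroup gains integrability at finite energy: `|T (t / 2) f| ^ 2 ≤ E M t` almost everywhere.
To see this, pair `f` with `T (t / 2) 1_S = A^{1/2} A^{-1/2} T (t / 2) 1_S`, apply Cauchy–Schwarz
and `‖A^{-1/2} T (t / 2) h‖ ^ 2 = ∫_t^∞ ⟪T s h, h⟫ ds`, and bound `⟪T s 1_S, 1_S⟫ ≤ L s μ(S) ^ 2`.
Hence `|T (t / 2) f| ≤ |f| / 2` on `{M t ≤ y}`, so that `f ^ 2 ≤ 4 |f - T (t / 2) f| ^ 2` there.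

What remains is `∫_0^∞ ‖f - T (t / 2) f‖ ^ 2 t⁻² dt = E log 2`, which the spectral measure of `f`
reduces to `∫_0^∞ (1 - e^{-sa}) ^ 2 s⁻² ds = 2 a log 2`.
-/

section Integrals

theorem lintegral_exp_neg_mul_Ioi {c : ℝ} (hc : 0 < c) :
    ∫⁻ s in Ioi (0 : ℝ), ENNReal.ofReal (Real.exp (-(s * c))) = ENNReal.ofReal c⁻¹ := by
  have hc' : -c < 0 := neg_neg_of_pos hc
  have hint := integrableOn_exp_mul_Ioi hc' 0
  simp only [show ∀ s : ℝ, -(s * c) = -c * s from fun s => by ring]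
  rw [← ofReal_integral_eq_lintegral_ofReal hint (ae_of_all _ fun s => (Real.exp_pos _).le),
    integral_exp_mul_Ioi hc' 0]
  simp [neg_div_neg_eq]

theorem lintegral_inv_sq_Ioi {c : ℝ} (hc : 0 < c) :
    ∫⁻ t in Ioi c, ENNReal.ofReal (t ^ 2)⁻¹ = ENNReal.ofReal c⁻¹ := by
  have hpow : EqOn (fun t : ℝ => t ^ (-2 : ℝ)) (fun t => (t ^ 2)⁻¹) (Ioi c) := fun t ht => by
    simp [Real.rpow_neg (hc.trans ht).le]
  have hint : IntegrableOn (fun t : ℝ => (t ^ 2)⁻¹) (Ioi c) :=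
    (integrableOn_Ioi_rpow_of_lt (by norm_num : (-2 : ℝ) < -1) hc).congr_fun hpow measurableSet_Ioi
  rw [← ofReal_integral_eq_lintegral_ofReal hint (ae_of_all _ fun t => by positivity),
    ← setIntegral_congr_fun measurableSet_Ioi hpow,
    integral_Ioi_rpow_of_lt (by norm_num : (-2 : ℝ) < -1) hc]
  norm_num [Real.rpow_neg_one]

theorem lintegral_lintegral_exp_neg_mul_sq (κ : Measure ℝ) [SFinite κ] (hκ : ∀ᵐ a ∂κ, 0 < a) :
    ∫⁻ s in Ioi (0 : ℝ), (∫⁻ a, ENNReal.ofReal (Real.exp (-(s * a))) ∂κ) ^ 2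
      = ∫⁻ a, ∫⁻ b, ENNReal.ofReal (a + b)⁻¹ ∂κ ∂κ := by
  have hsq (s : ℝ) : (∫⁻ a, ENNReal.ofReal (Real.exp (-(s * a))) ∂κ) ^ 2
      = ∫⁻ p, ENNReal.ofReal (Real.exp (-(s * (p.1 + p.2)))) ∂κ.prod κ := by
    rw [sq, ← lintegral_prod_mul (by fun_prop) (by fun_prop)]
    refine lintegral_congr fun p => ?_
    rw [← ENNReal.ofReal_mul (Real.exp_pos _).le, ← Real.exp_add]
    congr 2
    ring
  simp only [hsq]
  rw [lintegral_lintegral_swap (by fun_prop), lintegral_prod _ (by fun_prop)]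
  refine lintegral_congr_ae (hκ.mono fun a ha => lintegral_congr_ae (hκ.mono fun b hb => ?_))
  exact lintegral_exp_neg_mul_Ioi (add_pos ha hb)

theorem lintegral_Ioc_exp_neg_mul {s a : ℝ} (hs : 0 < s) (ha : 0 ≤ a) :
    ∫⁻ b in Ioc 0 a, ENNReal.ofReal (Real.exp (-(s * b)))
      = ENNReal.ofReal ((1 - Real.exp (-(s * a))) / s) := by
  have hint : ∫ b in (0 : ℝ)..a, Real.exp (-(s * b)) = (1 - Real.exp (-(s * a))) / s := by
    simp only [← neg_mul]
    rw [intervalIntegral.integral_comp_mul_left Real.exp (neg_ne_zero.2 hs.ne'), integral_exp]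
    simp only [mul_zero, Real.exp_zero, smul_eq_mul]
    field_simp
    ring
  rw [← hint, intervalIntegral.integral_of_le ha, ofReal_integral_eq_lintegral_ofReal
    (Continuous.integrableOn_Ioc (by fun_prop)) (ae_of_all _ fun b => (Real.exp_pos _).le)]

theorem lintegral_Ioc_inv_add {a c : ℝ} (ha : 0 < a) (hc : 0 ≤ c) :
    ∫⁻ b in Ioc 0 c, ENNReal.ofReal (a + b)⁻¹
      = ENNReal.ofReal (Real.log (a + c) - Real.log a) := by
  have hpos : ∀ b ∈ Icc 0 c, 0 < a + b := fun b hb => add_pos_of_pos_of_nonneg ha hb.1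
  have hcont : ContinuousOn (fun b => (a + b)⁻¹) (Icc 0 c) :=
    ContinuousOn.inv₀ (by fun_prop) fun b hb => (hpos b hb).ne'
  have hint : ∫ b in (0 : ℝ)..c, (a + b)⁻¹ = Real.log (a + c) - Real.log a := by
    rw [intervalIntegral.integral_comp_add_left (fun b => b⁻¹), add_zero,
      integral_inv_of_pos ha (by linarith), Real.log_div (by linarith) ha.ne']
  rw [← hint, intervalIntegral.integral_of_le hc, ofReal_integral_eq_lintegral_ofReal
    (hcont.integrableOn_Icc.mono_set Ioc_subset_Icc_self)]
  filter_upwards [ae_restrict_mem measurableSet_Ioc] with b hb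
  exact inv_nonneg.2 (hpos b (Ioc_subset_Icc_self hb)).le

theorem lintegral_Ioc_log_add_sub_log {c : ℝ} (hc : 0 ≤ c) :
    ∫⁻ a in Ioc 0 c, ENNReal.ofReal (Real.log (a + c) - Real.log a)
      = ENNReal.ofReal (2 * c * Real.log 2) := by
  have hi : IntervalIntegrable (fun a => Real.log (a + c)) volume 0 c := by
    simpa using
      (intervalIntegral.intervalIntegrable_log' (a := 0 + c) (b := c + c)).comp_add_right c
  have hint : ∫ a in (0 : ℝ)..c, (Real.log (a + c) - Real.log a) = 2 * c * Real.log 2 := by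
    rw [intervalIntegral.integral_sub hi intervalIntegral.intervalIntegrable_log',
      intervalIntegral.integral_comp_add_right Real.log, integral_log, integral_log, zero_add,
      ← two_mul]
    rcases hc.eq_or_lt with rfl | hc
    · simp
    · rw [Real.log_mul two_ne_zero hc.ne']
      ring
  rw [← hint, intervalIntegral.integral_of_le hc, ofReal_integral_eq_lintegral_ofReal
    (hi.sub intervalIntegral.intervalIntegrable_log').1]
  filter_upwards [ae_restrict_mem measurableSet_Ioc] with a ha
  exact sub_nonneg.2 (Real.log_le_log ha.1 (by linarith))

/- `(1 - e^{-sa}) / s` is the Laplace transform of the Lebesgue measure of `(0, a]`. -/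
theorem lintegral_one_sub_exp_sq_div_sq {a : ℝ} (ha : 0 ≤ a) :
    ∫⁻ s in Ioi (0 : ℝ), ENNReal.ofReal ((1 - Real.exp (-(s * a))) ^ 2 / s ^ 2)
      = ENNReal.ofReal (2 * a * Real.log 2) := by
  calc ∫⁻ s in Ioi (0 : ℝ), ENNReal.ofReal ((1 - Real.exp (-(s * a))) ^ 2 / s ^ 2)
      = ∫⁻ s in Ioi (0 : ℝ), (∫⁻ b in Ioc 0 a, ENNReal.ofReal (Real.exp (-(s * b)))) ^ 2 := by
        refine setLIntegral_congr_fun measurableSet_Ioi fun s (hs : 0 < s) => ?_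
        have hexp : Real.exp (-(s * a)) ≤ 1 :=
          Real.exp_le_one_iff.2 (neg_nonpos.2 (mul_nonneg hs.le ha))
        rw [lintegral_Ioc_exp_neg_mul hs ha, ← div_pow,
          ENNReal.ofReal_pow (div_nonneg (sub_nonneg.2 hexp) hs.le)]
    _ = ∫⁻ c in Ioc 0 a, ∫⁻ b in Ioc 0 a, ENNReal.ofReal (c + b)⁻¹ :=
        lintegral_lintegral_exp_neg_mul_sq _
          ((ae_restrict_mem measurableSet_Ioc).mono fun b hb => hb.1)
    _ = ∫⁻ c in Ioc 0 a, ENNReal.ofReal (Real.log (c + a) - Real.log c) :=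
        setLIntegral_congr_fun measurableSet_Ioc fun c hc => lintegral_Ioc_inv_add hc.1 ha
    _ = ENNReal.ofReal (2 * a * Real.log 2) := lintegral_Ioc_log_add_sub_log ha

theorem mul_sum_range_le_integral_Ioi_of_antitoneOn {φ : ℝ → ℝ} {a ε : ℝ} (hε : 0 < ε)
    (hφ : AntitoneOn φ (Ici a)) (hφ0 : ∀ s, a ≤ s → 0 ≤ φ s) (hint : IntegrableOn φ (Ioi a))
    (n : ℕ) :
    ε * ∑ k ∈ Finset.range n, φ (a + k * ε) ≤ ε * φ a + ∫ s in Ioi a, φ s := by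
  have hgrid (k : ℕ) : a ≤ a + k * ε := le_add_of_nonneg_right (by positivity)
  have hanti : AntitoneOn (fun x => φ (a + ε * x)) (Icc 0 (0 + (n : ℝ))) :=
    fun x hx y hy hxy => hφ (le_add_of_nonneg_right (mul_nonneg hε.le hx.1))
      (le_add_of_nonneg_right (mul_nonneg hε.le hy.1)) (by gcongr)
  have htail : ε * ∑ k ∈ Finset.range n, φ (a + (k + 1 : ℕ) * ε) ≤ ∫ s in Ioi a, φ s :=
    calc ε * ∑ k ∈ Finset.range n, φ (a + (k + 1 : ℕ) * ε)
        ≤ ε * ∫ x in (0 : ℝ)..0 + n, φ (a + ε * x) := by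
          gcongr
          simpa only [zero_add, mul_comm ε] using hanti.sum_le_integral
      _ = ∫ s in a..a + ε * n, φ s := by
          rw [intervalIntegral.integral_comp_add_mul φ hε.ne' a, smul_eq_mul,
            mul_inv_cancel_left₀ hε.ne', zero_add, mul_zero, add_zero]
      _ ≤ ∫ s in Ioi a, φ s := by
          rw [intervalIntegral.integral_of_le (by rw [mul_comm]; exact hgrid n)]
          refine setIntegral_mono_set hint ?_ Ioc_subset_Ioi_self.eventuallyLE
          filter_upwards [ae_restrict_mem measurableSet_Ioi] with s hs using hφ0 s (le_of_lt hs)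
  calc ε * ∑ k ∈ Finset.range n, φ (a + k * ε)
      ≤ ε * ∑ k ∈ Finset.range (n + 1), φ (a + k * ε) := by
        rw [Finset.sum_range_succ]
        gcongr
        exact le_add_of_nonneg_right (hφ0 _ (hgrid n))
    _ = ε * φ a + ε * ∑ k ∈ Finset.range n, φ (a + (k + 1 : ℕ) * ε) := by
        rw [Finset.sum_range_succ', mul_add, add_comm, Nat.cast_zero, zero_mul, add_zero]
    _ ≤ ε * φ a + ∫ s in Ioi a, φ s := by gcongr

theorem antitoneOn_integral_Ioi {φ : ℝ → ℝ} {a : ℝ} (hφ0 : ∀ s > a, 0 ≤ φ s)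
    (hint : ∀ t > a, IntegrableOn φ (Ioi t)) :
    AntitoneOn (fun t => ∫ s in Ioi t, φ s) (Ioi a) := by
  intro s (hs : a < s) t _ hst
  refine setIntegral_mono_set (hint s hs) ?_ (Ioi_subset_Ioi hst).eventuallyLE
  filter_upwards [ae_restrict_mem measurableSet_Ioi] with r hr using hφ0 r (hs.trans hr)

end Integrals

section HeatSemigroup

variable {H : Type*} [NormedAddCommGroup H] [InnerProductSpace ℝ H] {T : ℝ → H →L[ℝ] H}

/-- `ρ` is the restriction to `(0, ∞)` of the spectral measure of the vector `g` with respect to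
the generator `A` of `T t = e^{-tA}`. The unbounded operator `A` is never mentioned: `ρ` is pinned
down by its Laplace transform. -/
structure IsSpectralMeasure (T : ℝ → H →L[ℝ] H) (g : H) (ρ : Measure ℝ) : Prop where
  measure_Iic_zero : ρ (Iic 0) = 0
  ofReal_inner_map_self : ∀ t > (0 : ℝ), ENNReal.ofReal ⟪T t g, g⟫_ℝ
    = ∫⁻ x, ENNReal.ofReal (Real.exp (-t * x)) ∂ρ

/-- The symmetric semigroup `T t = e^{-tA} Π`, `t > 0`, of a positive self-adjoint operator `A`,
where `Π` is the projection onto `(ker A)^⊥`. The spectral theorem for `A` enters only through the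
existence of spectral measures without atom at `0`. -/
structure IsHeatSemigroup (T : ℝ → H →L[ℝ] H) : Prop where
  comp_eq : ∀ s t, 0 < s → 0 < t → T s ∘L T t = T (s + t)
  inner_map_left : ∀ t > (0 : ℝ), ∀ f g, ⟪T t f, g⟫_ℝ = ⟪f, T t g⟫_ℝ
  exists_isSpectralMeasure : ∀ g, ∃ ρ, IsSpectralMeasure T g ρ

theorem IsSpectralMeasure.ae_pos {g : H} {ρ : Measure ℝ} (hρ : IsSpectralMeasure T g ρ) :
    ∀ᵐ x ∂ρ, 0 < x := by
  rw [ae_iff]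
  simpa only [not_lt] using! hρ.measure_Iic_zero

namespace IsHeatSemigroup

theorem map_map (hT : IsHeatSemigroup T) {s t : ℝ} (hs : 0 < s) (ht : 0 < t) (g : H) :
    T s (T t g) = T (s + t) g :=
  congrArg (fun S : H →L[ℝ] H => S g) (hT.comp_eq s t hs ht)

theorem inner_map_map (hT : IsHeatSemigroup T) {s t : ℝ} (hs : 0 < s) (ht : 0 < t) (f g : H) :
    ⟪T s f, T t g⟫_ℝ = ⟪T (s + t) f, g⟫_ℝ := by
  rw [← hT.inner_map_left t ht, hT.map_map ht hs, add_comm]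

theorem norm_map_sq (hT : IsHeatSemigroup T) {t : ℝ} (ht : 0 < t) (g : H) :
    ‖T t g‖ ^ 2 = ⟪T (t + t) g, g⟫_ℝ := by
  rw [← real_inner_self_eq_norm_sq, hT.inner_map_map ht ht]

theorem inner_map_self_nonneg (hT : IsHeatSemigroup T) {t : ℝ} (ht : 0 < t) (g : H) :
    0 ≤ ⟪T t g, g⟫_ℝ := by
  rw [← add_halves t, ← hT.norm_map_sq (half_pos ht)]
  positivity

theorem antitoneOn_inner_map_self (hT : IsHeatSemigroup T) (g : H) :
    AntitoneOn (fun t => ⟪T t g, g⟫_ℝ) (Ioi 0) := by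
  intro s hs t ht hst
  obtain ⟨ρ, hρ⟩ := hT.exists_isSpectralMeasure g
  rw [← ENNReal.ofReal_le_ofReal_iff (hT.inner_map_self_nonneg hs g),
    hρ.ofReal_inner_map_self t ht, hρ.ofReal_inner_map_self s hs]
  refine lintegral_mono_ae (hρ.ae_pos.mono fun x hx => ?_)
  gcongr

theorem integrableOn_inner_map_self_of_le (hT : IsHeatSemigroup T) {h : H} {φ : ℝ → ℝ} {t : ℝ}
    (ht : 0 ≤ t) (hφ : IntegrableOn φ (Ioi t)) (hle : ∀ s > t, ⟪T s h, h⟫_ℝ ≤ φ s) :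
    IntegrableOn (fun s => ⟪T s h, h⟫_ℝ) (Ioi t) := by
  have hanti : AntitoneOn (fun s => ⟪T s h, h⟫_ℝ) (Ioi t) :=
    (hT.antitoneOn_inner_map_self h).mono (Ioi_subset_Ioi ht)
  refine hφ.mono' (aemeasurable_restrict_of_antitoneOn measurableSet_Ioi hanti).aestronglyMeasurable
    ?_
  filter_upwards [ae_restrict_mem measurableSet_Ioi] with s hs
  rw [Real.norm_of_nonneg (hT.inner_map_self_nonneg (ht.trans_lt hs) h)]
  exact hle s hs

theorem inner_sub_map_self_nonneg (hT : IsHeatSemigroup T) {t : ℝ} (ht : 0 < t) (g : H) :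
    0 ≤ ⟪g, g - T t g⟫_ℝ := by
  have hdecay : ‖T t g‖ ^ 2 ≤ ⟪T t g, g⟫_ℝ := by
    rw [hT.norm_map_sq ht]
    exact hT.antitoneOn_inner_map_self g ht (add_pos ht ht) (by linarith)
  have hle : ⟪T t g, g⟫_ℝ ≤ ‖g‖ ^ 2 := by
    nlinarith [real_inner_le_norm (T t g) g, norm_nonneg g, norm_nonneg (T t g)]
  rwa [inner_sub_right, real_inner_self_eq_norm_sq, real_inner_comm, sub_nonneg]

theorem nonneg_of_forall_inner_sub_map_self_le (hT : IsHeatSemigroup T) {f : H} {E : ℝ}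
    (hE : ∀ ε > 0, ⟪f, f - T ε f⟫_ℝ ≤ ε * E) : 0 ≤ E := by
  simpa using (hT.inner_sub_map_self_nonneg one_pos f).trans (hE 1 one_pos)

theorem inner_sub_map_sq_le (hT : IsHeatSemigroup T) {t : ℝ} (ht : 0 < t) (f g : H) :
    ⟪f, g - T t g⟫_ℝ ^ 2 ≤ ⟪f, f - T t f⟫_ℝ * ⟪g, g - T t g⟫_ℝ := by
  let B : LinearMap.BilinForm ℝ H := (innerₗ H).compl₂ (LinearMap.id - (T t : H →ₗ[ℝ] H))
  have hB : LinearMap.IsSymm B := ⟨fun f g => by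
    change ⟪f, g - T t g⟫_ℝ = ⟪g, f - T t f⟫_ℝ
    rw [inner_sub_right, inner_sub_right, ← hT.inner_map_left t ht, real_inner_comm g f,
      real_inner_comm (T t f) g]⟩
  exact B.apply_sq_le_of_symm (hT.inner_sub_map_self_nonneg ht) hB f g

theorem sum_range_map_sub_map_sum (hT : IsHeatSemigroup T) {t ε : ℝ} (ht : 0 < t) (hε : 0 < ε)
    (n : ℕ) (h : H) :
    ∑ k ∈ Finset.range n, T (t + k * ε) h - T ε (∑ k ∈ Finset.range n, T (t + k * ε) h)
      = T t h - T (t + n * ε) h := by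
  have hshift (k : ℕ) : T ε (T (t + k * ε) h) = T (t + (k + 1 : ℕ) * ε) h := by
    rw [hT.map_map hε (by positivity)]
    congr 2
    push_cast
    ring
  simp only [map_sum, hshift]
  rw [← Finset.sum_sub_distrib, Finset.sum_range_sub' fun k : ℕ => T (t + k * ε) h, Nat.cast_zero,
    zero_mul, add_zero]

/- Cauchy–Schwarz for the form `⟪·, (1 - T ε) ·⟫`, applied to `f` and to the Riemann sum
`∑ k < n, T (t / 2 + k ε) h`, an approximation of `A⁻¹ T (t / 2) h / ε`. -/
theorem inner_map_sub_map_sq_le (hT : IsHeatSemigroup T) {t ε : ℝ} (ht : 0 < t) (hε : 0 < ε)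
    (n : ℕ) (f h : H) :
    ⟪f, T (t / 2) h - T (t / 2 + n * ε) h⟫_ℝ ^ 2
      ≤ ⟪f, f - T ε f⟫_ℝ * ∑ k ∈ Finset.range n, ⟪T (t + k * ε) h, h⟫_ℝ := by
  set R : H := ∑ k ∈ Finset.range n, T (t / 2 + k * ε) h with hR
  have htel : R - T ε R = T (t / 2) h - T (t / 2 + n * ε) h :=
    hT.sum_range_map_sub_map_sum (half_pos ht) hε n h
  have hpos (k : ℕ) : 0 < t / 2 + k * ε := by positivity
  have hRR : ⟪R, R - T ε R⟫_ℝ ≤ ∑ k ∈ Finset.range n, ⟪T (t + k * ε) h, h⟫_ℝ := by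
    rw [htel, hR, sum_inner]
    refine Finset.sum_le_sum fun k _ => ?_
    rw [inner_sub_right, hT.inner_map_map (hpos k) (half_pos ht),
      hT.inner_map_map (hpos k) (hpos n), add_right_comm, add_halves]
    exact sub_le_self _ (hT.inner_map_self_nonneg (add_pos (hpos k) (hpos n)) h)
  rw [← htel]
  exact (hT.inner_sub_map_sq_le hε f R).trans
    (mul_le_mul_of_nonneg_left hRR (hT.inner_sub_map_self_nonneg hε f))

theorem mul_sum_range_inner_map_le (hT : IsHeatSemigroup T) {t ε : ℝ} (ht : 0 < t) (hε : 0 < ε)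
    {h : H} (hint : IntegrableOn (fun s => ⟪T s h, h⟫_ℝ) (Ioi t)) (n : ℕ) :
    ε * ∑ k ∈ Finset.range n, ⟪T (t + k * ε) h, h⟫_ℝ
      ≤ ε * ⟪T t h, h⟫_ℝ + ∫ s in Ioi t, ⟪T s h, h⟫_ℝ :=
  mul_sum_range_le_integral_Ioi_of_antitoneOn hε
    ((hT.antitoneOn_inner_map_self h).mono fun _ hs => ht.trans_le hs)
    (fun _ hs => hT.inner_map_self_nonneg (ht.trans_le hs) h) hint n

theorem tendsto_map_add_nat_mul (hT : IsHeatSemigroup T) {t ε : ℝ} (ht : 0 < t) (hε : 0 < ε)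
    {h : H} (hint : IntegrableOn (fun s => ⟪T s h, h⟫_ℝ) (Ioi t)) :
    Filter.Tendsto (fun n : ℕ => T (t / 2 + n * ε) h) Filter.atTop (nhds 0) := by
  have hε' : 0 < 2 * ε := by positivity
  have hsum : Summable fun n : ℕ => ⟪T (t + n * (2 * ε)) h, h⟫_ℝ :=
    summable_of_sum_range_le (fun n => hT.inner_map_self_nonneg (by positivity) h) fun n =>
      (le_div_iff₀' hε').2 (hT.mul_sum_range_inner_map_le ht hε' hint n)
  have hsq : Filter.Tendsto (fun n : ℕ => ‖T (t / 2 + n * ε) h‖ ^ 2) Filter.atTop (nhds 0) := by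
    refine hsum.tendsto_atTop_zero.congr fun n => ?_
    rw [hT.norm_map_sq (by positivity)]
    congr 3
    ring
  exact tendsto_zero_iff_norm_tendsto_zero.2 (by simpa using hsq.sqrt)

/- In terms of the generator, `⟪f, T (t / 2) h⟫ = ⟪A^{1/2} f, A^{-1/2} T (t / 2) h⟫` and the
integral is `‖A^{-1/2} T (t / 2) h‖ ^ 2`. -/
theorem inner_map_sq_le (hT : IsHeatSemigroup T) {f h : H} {E : ℝ}
    (hE : ∀ ε > 0, ⟪f, f - T ε f⟫_ℝ ≤ ε * E) {t : ℝ} (ht : 0 < t)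
    (hint : IntegrableOn (fun s => ⟪T s h, h⟫_ℝ) (Ioi t)) :
    ⟪f, T (t / 2) h⟫_ℝ ^ 2 ≤ E * ∫ s in Ioi t, ⟪T s h, h⟫_ℝ := by
  set I := ∫ s in Ioi t, ⟪T s h, h⟫_ℝ
  have hE0 : 0 ≤ E := hT.nonneg_of_forall_inner_sub_map_self_le hE
  have hstep (ε : ℝ) (hε : 0 < ε) : ⟪f, T (t / 2) h⟫_ℝ ^ 2 ≤ E * (ε * ⟪T t h, h⟫_ℝ + I) := by
    have hlim : Filter.Tendsto (fun n : ℕ => ⟪f, T (t / 2) h - T (t / 2 + n * ε) h⟫_ℝ ^ 2)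
        Filter.atTop (nhds (⟪f, T (t / 2) h⟫_ℝ ^ 2)) := by
      simpa using ((tendsto_const_nhds (x := f)).inner
        ((hT.tendsto_map_add_nat_mul ht hε hint).const_sub (T (t / 2) h))).pow 2
    refine le_of_tendsto' hlim fun n => ?_
    calc ⟪f, T (t / 2) h - T (t / 2 + n * ε) h⟫_ℝ ^ 2
        ≤ ⟪f, f - T ε f⟫_ℝ * ∑ k ∈ Finset.range n, ⟪T (t + k * ε) h, h⟫_ℝ :=
          hT.inner_map_sub_map_sq_le ht hε n f h
      _ ≤ ε * E * ∑ k ∈ Finset.range n, ⟪T (t + k * ε) h, h⟫_ℝ :=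
          mul_le_mul_of_nonneg_right (hE ε hε) <|
            Finset.sum_nonneg fun k _ => hT.inner_map_self_nonneg (by positivity) h
      _ = E * (ε * ∑ k ∈ Finset.range n, ⟪T (t + k * ε) h, h⟫_ℝ) := by ring
      _ ≤ E * (ε * ⟪T t h, h⟫_ℝ + I) :=
          mul_le_mul_of_nonneg_left (hT.mul_sum_range_inner_map_le ht hε hint n) hE0
  have hcont : Continuous fun ε : ℝ => E * (ε * ⟪T t h, h⟫_ℝ + I) := by fun_prop
  have hlim : Filter.Tendsto (fun ε : ℝ => E * (ε * ⟪T t h, h⟫_ℝ + I)) (nhdsWithin 0 (Ioi 0))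
      (nhds (E * I)) := by
    simpa using (hcont.tendsto 0).mono_left nhdsWithin_le_nhds
  exact ge_of_tendsto hlim (eventually_mem_nhdsWithin.mono hstep)

end IsHeatSemigroup

namespace IsSpectralMeasure

variable {f : H} {ρ : Measure ℝ}

theorem integrable_exp (hρ : IsSpectralMeasure T f ρ) {t : ℝ} (ht : 0 < t) :
    Integrable (fun x => Real.exp (-t * x)) ρ := by
  rw [← lintegral_ofReal_ne_top_iff_integrable (by fun_prop)
    (ae_of_all _ fun x => (Real.exp_pos _).le), ← hρ.ofReal_inner_map_self t ht]
  exact ENNReal.ofReal_ne_top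

theorem inner_map_self_eq_integral (hT : IsHeatSemigroup T) (hρ : IsSpectralMeasure T f ρ) {t : ℝ}
    (ht : 0 < t) : ⟪T t f, f⟫_ℝ = ∫ x, Real.exp (-t * x) ∂ρ := by
  rw [integral_eq_lintegral_of_nonneg_ae (ae_of_all _ fun x => (Real.exp_pos _).le)
    (by fun_prop), ← hρ.ofReal_inner_map_self t ht,
    ENNReal.toReal_ofReal (hT.inner_map_self_nonneg ht f)]

theorem map_ne_zero (hρ : IsSpectralMeasure T f ρ) (hρ0 : ρ ≠ 0) {t : ℝ} (ht : 0 < t) :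
    T t f ≠ 0 := by
  intro hzero
  have hexp := hρ.ofReal_inner_map_self t ht
  rw [hzero, inner_zero_left, ENNReal.ofReal_zero, eq_comm,
    lintegral_eq_zero_iff (by fun_prop)] at hexp
  have hfalse : ∀ᵐ _ ∂ρ, False := hexp.mono fun x hx =>
    (ENNReal.ofReal_pos.2 (Real.exp_pos (-t * x))).ne' hx
  exact hρ0 (by simpa using hfalse)

theorem integral_id_pos (hρ : IsSpectralMeasure T f ρ) (hρ0 : ρ ≠ 0)
    (hint : Integrable (fun x => x) ρ) : 0 < ∫ x, x ∂ρ := by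
  have hnonneg : 0 ≤ᵐ[ρ] fun x => x := hρ.ae_pos.mono fun x hx => hx.le
  refine (integral_nonneg_of_ae hnonneg).lt_of_ne' fun hzero => hρ0 ?_
  have hfalse : ∀ᵐ _ ∂ρ, False := by
    filter_upwards [hρ.ae_pos, (integral_eq_zero_iff_of_nonneg_ae hnonneg hint).1 hzero]
      with x hx hx0 using hx.ne' hx0
  simpa using hfalse

variable [IsFiniteMeasure ρ]

theorem inner_sub_map_self_le (hT : IsHeatSemigroup T) (hρ : IsSpectralMeasure T f ρ)
    (hmass : ρ.real univ = ‖f‖ ^ 2) (hint : Integrable (fun x => x) ρ) {ε : ℝ} (hε : 0 < ε) :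
    ⟪f, f - T ε f⟫_ℝ ≤ ε * ∫ x, x ∂ρ :=
  calc ⟪f, f - T ε f⟫_ℝ = ∫ x, (1 - Real.exp (-ε * x)) ∂ρ := by
        rw [inner_sub_right, real_inner_self_eq_norm_sq, real_inner_comm,
          hρ.inner_map_self_eq_integral hT hε,
          integral_sub (integrable_const _) (hρ.integrable_exp hε)]
        simp [hmass]
    _ ≤ ∫ x, ε * x ∂ρ :=
        integral_mono ((integrable_const _).sub (hρ.integrable_exp hε)) (hint.const_mul ε)
          fun x => by linarith [Real.add_one_le_exp (-ε * x)]
    _ = ε * ∫ x, x ∂ρ := integral_const_mul ε _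

theorem ofReal_norm_sub_map_sq (hT : IsHeatSemigroup T) (hρ : IsSpectralMeasure T f ρ)
    (hmass : ρ.real univ = ‖f‖ ^ 2) {t : ℝ} (ht : 0 < t) :
    ENNReal.ofReal (‖f - T t f‖ ^ 2)
      = ∫⁻ x, ENNReal.ofReal ((1 - Real.exp (-t * x)) ^ 2) ∂ρ := by
  have htt : 0 < t + t := add_pos ht ht
  have hexpand : (fun x => (1 - Real.exp (-t * x)) ^ 2)
      = fun x => 1 - 2 * Real.exp (-t * x) + Real.exp (-(t + t) * x) := by
    funext x
    rw [show -(t + t) * x = -t * x + -t * x by ring, Real.exp_add]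
    ring
  have hlin : Integrable (fun x => 1 - 2 * Real.exp (-t * x)) ρ :=
    (integrable_const _).sub ((hρ.integrable_exp ht).const_mul 2)
  have hint : Integrable (fun x => (1 - Real.exp (-t * x)) ^ 2) ρ :=
    hexpand ▸ hlin.add (hρ.integrable_exp htt)
  rw [← ofReal_integral_eq_lintegral_ofReal hint (ae_of_all _ fun x => sq_nonneg _), hexpand,
    integral_add hlin (hρ.integrable_exp htt),
    integral_sub (integrable_const _) ((hρ.integrable_exp ht).const_mul 2), integral_const_mul,
    ← hρ.inner_map_self_eq_integral hT ht, ← hρ.inner_map_self_eq_integral hT htt,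
    norm_sub_sq_real, hT.norm_map_sq ht, real_inner_comm (T t f) f]
  simp [hmass]

theorem lintegral_norm_sub_map_half_sq_div_sq (hT : IsHeatSemigroup T)
    (hρ : IsSpectralMeasure T f ρ) (hmass : ρ.real univ = ‖f‖ ^ 2)
    (hint : Integrable (fun x => x) ρ) :
    ∫⁻ t in Ioi (0 : ℝ), ENNReal.ofReal (‖f - T (t / 2) f‖ ^ 2 / t ^ 2)
      = ENNReal.ofReal ((∫ x, x ∂ρ) * Real.log 2) := by
  calc ∫⁻ t in Ioi (0 : ℝ), ENNReal.ofReal (‖f - T (t / 2) f‖ ^ 2 / t ^ 2)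
      = ∫⁻ t in Ioi (0 : ℝ), (∫⁻ x,
          ENNReal.ofReal ((1 - Real.exp (-(t * (x / 2)))) ^ 2 / t ^ 2) ∂ρ) := by
        refine setLIntegral_congr_fun measurableSet_Ioi fun t (ht : 0 < t) => ?_
        simp only [div_eq_mul_inv _ (t ^ 2), ENNReal.ofReal_mul (sq_nonneg _)]
        rw [hρ.ofReal_norm_sub_map_sq hT hmass (half_pos ht),
          lintegral_mul_const' _ _ ENNReal.ofReal_ne_top]
        congr! 7
        ring
    _ = ∫⁻ x, (∫⁻ t in Ioi (0 : ℝ),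
          ENNReal.ofReal ((1 - Real.exp (-(t * (x / 2)))) ^ 2 / t ^ 2)) ∂ρ :=
        lintegral_lintegral_swap (by fun_prop)
    _ = ∫⁻ x, ENNReal.ofReal (x * Real.log 2) ∂ρ := by
        refine lintegral_congr_ae (hρ.ae_pos.mono fun x hx => ?_)
        beta_reduce
        rw [lintegral_one_sub_exp_sq_div_sq (half_pos hx).le, mul_div_cancel₀ x two_ne_zero]
    _ = ENNReal.ofReal ((∫ x, x ∂ρ) * Real.log 2) := by
        rw [← integral_mul_const, ofReal_integral_eq_lintegral_ofReal (hint.mul_const _)]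
        exact hρ.ae_pos.mono fun x hx => mul_nonneg hx.le (Real.log_nonneg one_le_two)

end IsSpectralMeasure

end HeatSemigroup

section GeneralizedInverse

/-- The right-continuous inverse `M⁻¹` of a decreasing function `M` on `(0, ∞)`. Where `M` does not
reach below `y`, the infimum of the empty set gives `0` instead of `∞`. -/
noncomputable def generalizedInverse (M : ℝ → ℝ) (y : ℝ) : ℝ :=
  sInf {t | 0 < t ∧ M t ≤ y}

variable {M : ℝ → ℝ}

theorem ofReal_inv_generalizedInverse_le (hM : AntitoneOn M (Ioi 0)) (y : ℝ) :
    ENNReal.ofReal (generalizedInverse M y)⁻¹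
      ≤ ∫⁻ t in Ioi (0 : ℝ), {t | M t ≤ y}.indicator (fun t => ENNReal.ofReal (t ^ 2)⁻¹) t := by
  set m := generalizedInverse M y with hm
  have hm0 : 0 ≤ m := Real.sInf_nonneg fun t ht => ht.1.le
  rcases hm0.eq_or_lt with hzero | hpos
  · simp [← hzero]
  have hne : {t | 0 < t ∧ M t ≤ y}.Nonempty := by
    by_contra hempty
    rw [hm, generalizedInverse, not_nonempty_iff_eq_empty.1 hempty, Real.sInf_empty] at hpos
    exact hpos.false
  rw [← lintegral_inv_sq_Ioi hpos]
  calc ∫⁻ t in Ioi m, ENNReal.ofReal (t ^ 2)⁻¹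
      = ∫⁻ t in Ioi m, {t | M t ≤ y}.indicator (fun t => ENNReal.ofReal (t ^ 2)⁻¹) t := by
        refine setLIntegral_congr_fun measurableSet_Ioi fun t (ht : m < t) => ?_
        obtain ⟨s, ⟨hs0, hsy⟩, hst⟩ := exists_lt_of_csInf_lt hne ht
        have hty : M t ≤ y := (hM hs0 (hs0.trans hst) hst.le).trans hsy
        exact (indicator_of_mem (s := {t | M t ≤ y}) hty fun t => ENNReal.ofReal (t ^ 2)⁻¹).symm
    _ ≤ ∫⁻ t in Ioi (0 : ℝ), {t | M t ≤ y}.indicator (fun t => ENNReal.ofReal (t ^ 2)⁻¹) t :=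
        lintegral_mono_set (Ioi_subset_Ioi hm0)

theorem lintegral_inv_generalizedInverse_le (hM : AntitoneOn M (Ioi 0)) {ρ : Measure X} [SFinite ρ]
    {y : X → ℝ} (hy : Measurable y) :
    ∫⁻ x, ENNReal.ofReal (generalizedInverse M (y x))⁻¹ ∂ρ
      ≤ ∫⁻ t in Ioi (0 : ℝ), ENNReal.ofReal (t ^ 2)⁻¹ * ρ {x | M t ≤ y x} := by
  have hMm : AEMeasurable M (volume.restrict (Ioi 0)) :=
    aemeasurable_restrict_of_antitoneOn measurableSet_Ioi hM
  have hset : NullMeasurableSet {p : X × ℝ | M p.2 ≤ y p.1}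
      (ρ.prod (volume.restrict (Ioi 0))) :=
    nullMeasurableSet_le hMm.comp_snd (hy.comp measurable_fst).aemeasurable
  have hjoint : AEMeasurable (Function.uncurry fun (x : X) (t : ℝ) =>
      {t | M t ≤ y x}.indicator (fun t => ENNReal.ofReal (t ^ 2)⁻¹) t)
      (ρ.prod (volume.restrict (Ioi 0))) :=
    AEMeasurable.indicator₀ (f := fun p : X × ℝ => ENNReal.ofReal (p.2 ^ 2)⁻¹) (by fun_prop) hset
  calc ∫⁻ x, ENNReal.ofReal (generalizedInverse M (y x))⁻¹ ∂ρ
      ≤ ∫⁻ x, (∫⁻ t in Ioi (0 : ℝ),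
          {t | M t ≤ y x}.indicator (fun t => ENNReal.ofReal (t ^ 2)⁻¹) t) ∂ρ :=
        lintegral_mono fun x => ofReal_inv_generalizedInverse_le hM (y x)
    _ = ∫⁻ t in Ioi (0 : ℝ), (∫⁻ x,
          {t | M t ≤ y x}.indicator (fun t => ENNReal.ofReal (t ^ 2)⁻¹) t ∂ρ) :=
        lintegral_lintegral_swap hjoint
    _ = ∫⁻ t in Ioi (0 : ℝ), ENNReal.ofReal (t ^ 2)⁻¹ * ρ {x | M t ≤ y x} :=
        lintegral_congr fun t => lintegral_indicator_const (measurableSet_le measurable_const hy) _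

end GeneralizedInverse

section LevelSets

variable {μ : Measure X}

theorem sq_le_four_mul_sq_sub {a b c : ℝ} (hb : b ^ 2 ≤ c) (ha : 4 * c ≤ a ^ 2) :
    a ^ 2 ≤ 4 * (a - b) ^ 2 := by
  have hba : |2 * b| ≤ |a| := sq_le_sq.1 (by linarith)
  have hab : |a| ≤ |2 * (a - b)| := by
    have htri := abs_sub_abs_le_abs_sub (2 * a) (2 * b)
    rw [← mul_sub, abs_mul 2 a, abs_two] at htri
    linarith
  linarith [sq_le_sq.2 hab]

theorem lintegral_ofReal_sq_eq_ofReal_norm_sq (g : Lp ℝ 2 μ) :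
    ∫⁻ x, ENNReal.ofReal (g x ^ 2) ∂μ = ENNReal.ofReal (‖g‖ ^ 2) := by
  rw [← real_inner_self_eq_norm_sq, L2.inner_def, ← ofReal_integral_eq_lintegral_ofReal
    (Lp.memLp g).integrable_sq (ae_of_all _ fun x => sq_nonneg _)]
  simp [pow_two]

theorem withDensity_sq_setOf_le (f g : Lp ℝ 2 μ) {c : ℝ} (hg : ∀ᵐ x ∂μ, g x ^ 2 ≤ c) :
    μ.withDensity (fun x => ENNReal.ofReal (f x ^ 2)) {x | 4 * c ≤ f x ^ 2}
      ≤ 4 * ENNReal.ofReal (‖f - g‖ ^ 2) := by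
  have hf : Measurable f := (Lp.stronglyMeasurable f).measurable
  have hset : MeasurableSet {x | 4 * c ≤ f x ^ 2} :=
    measurableSet_le measurable_const (hf.pow_const 2)
  have hpt : ∀ᵐ x ∂μ, 4 * c ≤ f x ^ 2 →
      ENNReal.ofReal (f x ^ 2) ≤ 4 * ENNReal.ofReal ((f - g) x ^ 2) := by
    filter_upwards [hg, Lp.coeFn_sub f g] with x hgx hsub hfx
    rw [hsub, ← ENNReal.ofReal_ofNat 4, ← ENNReal.ofReal_mul zero_le_four]
    exact ENNReal.ofReal_le_ofReal (sq_le_four_mul_sq_sub hgx hfx)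
  rw [withDensity_apply _ hset, ← lintegral_ofReal_sq_eq_ofReal_norm_sq,
    ← lintegral_const_mul' _ _ (ENNReal.ofNat_ne_top)]
  exact (setLIntegral_mono_ae' hset hpt).trans (setLIntegral_le_lintegral _ _)

theorem lintegral_ofReal_div_div_eq_mul_withDensity {w : X → ℝ} (hw : Measurable w)
    (hw0 : ∀ x, 0 ≤ w x) {c : ℝ} (hc : 0 ≤ c) (m : X → ℝ) :
    ∫⁻ x, ENNReal.ofReal (w x / c / m x) ∂μ = ENNReal.ofReal c⁻¹
      * ∫⁻ x, ENNReal.ofReal (m x)⁻¹ ∂μ.withDensity fun x => ENNReal.ofReal (w x) := by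
  rw [lintegral_withDensity_eq_lintegral_mul_non_measurable _ hw.ennreal_ofReal
    (ae_of_all _ fun x => ENNReal.ofReal_lt_top), ← lintegral_const_mul' _ _ ENNReal.ofReal_ne_top]
  refine lintegral_congr fun x => ?_
  rw [Pi.mul_apply, ← ENNReal.ofReal_mul (hw0 x), ← ENNReal.ofReal_mul (inv_nonneg.2 hc)]
  congr 1
  ring

theorem lintegral_sq_div_generalizedInverse_le (f : Lp ℝ 2 μ) {g : ℝ → Lp ℝ 2 μ} {M : ℝ → ℝ} {E : ℝ}
    (hE : 0 < E) (hM : AntitoneOn M (Ioi 0))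
    (hg : ∀ t > 0, ∀ᵐ x ∂μ, g t x ^ 2 ≤ E * M t) :
    ∫⁻ x, ENNReal.ofReal (f x ^ 2 / (4 * E) / generalizedInverse M (f x ^ 2 / (4 * E))) ∂μ
      ≤ ENNReal.ofReal E⁻¹ * ∫⁻ t in Ioi (0 : ℝ), ENNReal.ofReal (‖f - g t‖ ^ 2 / t ^ 2) := by
  have hE4 : 0 < 4 * E := by positivity
  have hf : Measurable f := (Lp.stronglyMeasurable f).measurable
  set ρ := μ.withDensity fun x => ENNReal.ofReal (f x ^ 2)
  have : IsFiniteMeasure ρ := isFiniteMeasure_withDensity_ofReal (Lp.memLp f).integrable_sq.2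
  have hlevel (t : ℝ) (ht : 0 < t) :
      ρ {x | M t ≤ f x ^ 2 / (4 * E)} ≤ 4 * ENNReal.ofReal (‖f - g t‖ ^ 2) := by
    simp only [le_div_iff₀ hE4, mul_comm (M t), mul_assoc]
    exact withDensity_sq_setOf_le f (g t) (hg t ht)
  calc ∫⁻ x, ENNReal.ofReal (f x ^ 2 / (4 * E) / generalizedInverse M (f x ^ 2 / (4 * E))) ∂μ
      = ENNReal.ofReal (4 * E)⁻¹
          * ∫⁻ x, ENNReal.ofReal (generalizedInverse M (f x ^ 2 / (4 * E)))⁻¹ ∂ρ :=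
        lintegral_ofReal_div_div_eq_mul_withDensity (hf.pow_const 2) (fun x => sq_nonneg _) hE4.le _
    _ ≤ ENNReal.ofReal (4 * E)⁻¹
          * ∫⁻ t in Ioi (0 : ℝ), ENNReal.ofReal (t ^ 2)⁻¹ * ρ {x | M t ≤ f x ^ 2 / (4 * E)} := by
        gcongr
        exact lintegral_inv_generalizedInverse_le hM ((hf.pow_const 2).div_const _)
    _ ≤ ENNReal.ofReal (4 * E)⁻¹
          * ∫⁻ t in Ioi (0 : ℝ), 4 * ENNReal.ofReal (‖f - g t‖ ^ 2 / t ^ 2) := by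
        refine mul_le_mul_right (setLIntegral_mono' measurableSet_Ioi fun t (ht : 0 < t) => ?_) _
        rw [div_eq_inv_mul, ENNReal.ofReal_mul (by positivity), mul_left_comm]
        gcongr
        exact hlevel t ht
    _ = ENNReal.ofReal E⁻¹ * ∫⁻ t in Ioi (0 : ℝ), ENNReal.ofReal (‖f - g t‖ ^ 2 / t ^ 2) := by
        rw [lintegral_const_mul' _ _ ENNReal.ofNat_ne_top, ← mul_assoc, ← ENNReal.ofReal_ofNat 4,
          ← ENNReal.ofReal_mul (inv_pos.2 hE4).le]
        congr 2
        field_simp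

end LevelSets

section Ultracontractivity

variable {μ : Measure X}

theorem ae_le_of_forall_setIntegral_le_mul_measureReal {p : ℝ≥0∞} [Fact (1 ≤ p)] (hp : p ≠ ⊤)
    {u : Lp ℝ p μ} {c : ℝ} (hc : 0 ≤ c)
    (hu : ∀ S, MeasurableSet S → μ S ≠ ⊤ → ∫ x in S, u x ∂μ ≤ c * μ.real S) :
    ∀ᵐ x ∂μ, u x ≤ c := by
  refine (ae_le_const_iff_forall_gt_measure_zero u c).2 fun d hcd => ?_
  have hd0 : 0 < d := hc.trans_lt hcd
  have hS : MeasurableSet {x | d ≤ u x} :=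
    measurableSet_le measurable_const (Lp.stronglyMeasurable u).measurable
  have hSfin : μ {x | d ≤ u x} ≠ ⊤ := by
    have hp0 : p ≠ 0 := (one_pos.trans_le Fact.out).ne'
    refine ((measure_mono fun x (hx : d ≤ u x) => ?_).trans_lt
      ((Lp.memLp u).meas_ge_lt_top hp0 hp (Real.toNNReal_pos.2 hd0).ne')).ne
    exact Real.toNNReal_le_iff_le_coe.2 (hx.trans (le_abs_self _))
  have hle : d * μ.real {x | d ≤ u x} ≤ c * μ.real {x | d ≤ u x} :=
    (setIntegral_ge_of_const_le_real hS hSfin (fun x hx => hx)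
      (integrableOn_Lp_of_measure_ne_top u Fact.out hSfin)).trans (hu _ hS hSfin)
  refine (measureReal_eq_zero_iff hSfin).1 ?_
  nlinarith [measureReal_nonneg (μ := μ) (s := {x | d ≤ u x})]

theorem ae_sq_le_of_forall_sq_setIntegral_le {p : ℝ≥0∞} [Fact (1 ≤ p)] (hp : p ≠ ⊤)
    {u : Lp ℝ p μ} {c : ℝ} (hc : 0 ≤ c)
    (hu : ∀ S, MeasurableSet S → μ S ≠ ⊤ → (∫ x in S, u x ∂μ) ^ 2 ≤ c * μ.real S ^ 2) :
    ∀ᵐ x ∂μ, u x ^ 2 ≤ c := by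
  have habs (S : Set X) (hS : MeasurableSet S) (hSfin : μ S ≠ ⊤) :
      |∫ x in S, u x ∂μ| ≤ √c * μ.real S := by
    refine abs_le_of_sq_le_sq ?_ (by positivity)
    rw [mul_pow, Real.sq_sqrt hc]
    exact hu S hS hSfin
  have hupper := ae_le_of_forall_setIntegral_le_mul_measureReal hp (Real.sqrt_nonneg c)
    fun S hS hSfin => (le_abs_self _).trans (habs S hS hSfin)
  have hlower : ∀ᵐ x ∂μ, (-u : Lp ℝ p μ) x ≤ √c :=
    ae_le_of_forall_setIntegral_le_mul_measureReal hp (Real.sqrt_nonneg c) fun S hS hSfin => by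
      rw [integral_congr_ae (ae_restrict_of_ae (Lp.coeFn_neg u))]
      simp only [Pi.neg_apply, integral_neg]
      exact (neg_le_abs _).trans (habs S hS hSfin)
  filter_upwards [hupper, hlower, Lp.coeFn_neg u] with x hx hnegx hneg
  rw [hneg, Pi.neg_apply] at hnegx
  exact Real.sq_le hc |>.2 ⟨by linarith, hx⟩

theorem eLpNorm_coe_smul {p q : ℝ≥0∞} (r : ℝ) (g : Lp ℝ p μ) :
    eLpNorm (r • g : Lp ℝ p μ) q μ = ‖r‖ₑ * eLpNorm g q μ := by
  rw [eLpNorm_congr_ae (Lp.coeFn_smul r g), eLpNorm_const_smul]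

theorem eLpNorm_one_indicatorConstLp {p : ℝ≥0∞} {S : Set X} (hS : MeasurableSet S)
    (hSfin : μ S ≠ ⊤) (r : ℝ) :
    eLpNorm (indicatorConstLp p hS hSfin r) 1 μ = ‖r‖ₑ * μ S := by
  rw [eLpNorm_congr_ae indicatorConstLp_coeFn,
    eLpNorm_indicator_const hS one_ne_zero ENNReal.one_ne_top]
  simp

theorem eLpNorm_top_map_le (B : Lp ℝ 2 μ →L[ℝ] Lp ℝ 2 μ) {h : Lp ℝ 2 μ}
    (hh : eLpNorm h 1 μ ≠ ⊤) :
    eLpNorm (B h) ⊤ μ ≤ opNorm1infty μ B * eLpNorm h 1 μ := by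
  rcases eq_or_ne (eLpNorm h 1 μ) 0 with hzero | hne
  · have h0 : h = 0 := Lp.eq_zero_iff_ae_eq_zero.2
      ((eLpNorm_eq_zero_iff (Lp.aestronglyMeasurable h) one_ne_zero).1 hzero)
    rw [h0, map_zero, eLpNorm_congr_ae (Lp.coeFn_zero ℝ 2 μ), eLpNorm_zero]
    exact zero_le
  obtain ⟨r, hr⟩ : ∃ r : ℝ, ‖r‖ₑ = (eLpNorm h 1 μ)⁻¹ :=
    ⟨(eLpNorm h 1 μ)⁻¹.toReal, by
      rw [Real.enorm_of_nonneg ENNReal.toReal_nonneg,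
        ENNReal.ofReal_toReal (ENNReal.inv_ne_top.2 hne)]⟩
  have hnorm : eLpNorm (r • h : Lp ℝ 2 μ) 1 μ ≤ 1 := by
    rw [eLpNorm_coe_smul, hr, ENNReal.inv_mul_cancel hne hh]
  have hsup : eLpNorm (B (r • h)) ⊤ μ ≤ opNorm1infty μ B :=
    le_iSup₂_of_le (f := fun (g : Lp ℝ 2 μ) (_ : eLpNorm g 1 μ ≤ 1) => eLpNorm (B g) ⊤ μ)
      (r • h) hnorm le_rfl
  rwa [map_smul, eLpNorm_coe_smul, hr, ← ENNReal.div_eq_inv_mul, ENNReal.div_le_iff hne hh] at hsup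

theorem eq_zero_of_opNorm1infty_eq_zero {B : Lp ℝ 2 μ →L[ℝ] Lp ℝ 2 μ}
    (hB : opNorm1infty μ B = 0) : B = 0 := by
  ext1 g
  induction g using Lp.induction (p := 2) ENNReal.ofNat_ne_top with
  | indicatorConst r hS hSfin =>
    rw [Lp.simpleFunc.coe_indicatorConst]
    have hfin : eLpNorm (indicatorConstLp 2 hS hSfin.ne r) 1 μ ≠ ⊤ := by
      rw [eLpNorm_one_indicatorConstLp]
      exact ENNReal.mul_ne_top enorm_ne_top hSfin.ne
    have hle := eLpNorm_top_map_le B hfin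
    rw [hB, zero_mul, nonpos_iff_eq_zero,
      eLpNorm_eq_zero_iff (Lp.aestronglyMeasurable _) ENNReal.top_ne_zero] at hle
    exact Lp.eq_zero_iff_ae_eq_zero.2 hle
  | add hf hg _ hBf hBg => rw [map_add, map_add, hBf, hBg]
  | isClosed => exact isClosed_eq B.continuous continuous_const

theorem inner_map_indicatorConstLp_le {B : Lp ℝ 2 μ →L[ℝ] Lp ℝ 2 μ} {Λ : ℝ} (hΛ : 0 ≤ Λ)
    (hB : opNorm1infty μ B ≤ ENNReal.ofReal Λ) {S : Set X} (hS : MeasurableSet S)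
    (hSfin : μ S ≠ ⊤) :
    ⟪B (indicatorConstLp 2 hS hSfin 1), indicatorConstLp 2 hS hSfin (1 : ℝ)⟫_ℝ
      ≤ Λ * μ.real S ^ 2 := by
  set h : Lp ℝ 2 μ := indicatorConstLp 2 hS hSfin (1 : ℝ) with hh
  have hh1 : eLpNorm h 1 μ = ENNReal.ofReal (μ.real S) := by
    rw [hh, eLpNorm_one_indicatorConstLp, enorm_one, one_mul, ofReal_measureReal hSfin]
  have hsup : eLpNorm (B h) ⊤ μ ≤ ENNReal.ofReal (Λ * μ.real S) := by
    rw [ENNReal.ofReal_mul hΛ, ← hh1]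
    exact (eLpNorm_top_map_le B (by rw [hh1]; exact ENNReal.ofReal_ne_top)).trans (by gcongr)
  have hae : ∀ᵐ x ∂μ, ‖B h x‖ ≤ Λ * μ.real S := by
    filter_upwards [ae_le_eLpNormEssSup (f := B h) (μ := μ)] with x hx
    rw [← eLpNorm_exponent_top] at hx
    rw [← ENNReal.ofReal_le_ofReal_iff (by positivity), ofReal_norm]
    exact hx.trans hsup
  rw [real_inner_comm, hh, L2.inner_indicatorConstLp_one, ← hh]
  calc ∫ x in S, B h x ∂μ ≤ Λ * μ.real S * μ.real S :=
        (le_abs_self _).trans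
          (norm_setIntegral_le_of_norm_le_const_ae' hSfin.lt_top (hae.mono fun x hx _ => hx))
    _ = Λ * μ.real S ^ 2 := by ring

theorem IsHeatSemigroup.ae_map_half_sq_le {T : ℝ → Lp ℝ 2 μ →L[ℝ] Lp ℝ 2 μ}
    (hT : IsHeatSemigroup T) {f : Lp ℝ 2 μ} {E t : ℝ} {L : ℝ → ℝ}
    (hE : ∀ ε > 0, ⟪f, f - T ε f⟫_ℝ ≤ ε * E) (hL0 : ∀ s > 0, 0 ≤ L s)
    (hL : ∀ s > 0, opNorm1infty μ (T s) ≤ ENNReal.ofReal (L s)) (ht : 0 < t)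
    (hLint : IntegrableOn L (Ioi t)) :
    ∀ᵐ x ∂μ, T (t / 2) f x ^ 2 ≤ E * ∫ s in Ioi t, L s := by
  have hE0 : 0 ≤ E := hT.nonneg_of_forall_inner_sub_map_self_le hE
  have hpos (s : ℝ) (hs : s ∈ Ioi t) : 0 < s := ht.trans hs
  have hL0' : 0 ≤ ∫ s in Ioi t, L s :=
    setIntegral_nonneg measurableSet_Ioi fun s hs => hL0 s (hpos s hs)
  refine ae_sq_le_of_forall_sq_setIntegral_le ENNReal.ofNat_ne_top (mul_nonneg hE0 hL0')
    fun S hS hSfin => ?_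
  set h : Lp ℝ 2 μ := indicatorConstLp 2 hS hSfin (1 : ℝ) with hh
  have hbound (s : ℝ) (hs : s ∈ Ioi t) : ⟪T s h, h⟫_ℝ ≤ L s * μ.real S ^ 2 :=
    inner_map_indicatorConstLp_le (hL0 s (hpos s hs)) (hL s (hpos s hs)) hS hSfin
  have hint : IntegrableOn (fun s => ⟪T s h, h⟫_ℝ) (Ioi t) :=
    hT.integrableOn_inner_map_self_of_le ht.le (hLint.mul_const _) hbound
  calc (∫ x in S, T (t / 2) f x ∂μ) ^ 2 = ⟪f, T (t / 2) h⟫_ℝ ^ 2 := by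
        rw [← hT.inner_map_left _ (half_pos ht), real_inner_comm, hh, L2.inner_indicatorConstLp_one]
    _ ≤ E * ∫ s in Ioi t, ⟪T s h, h⟫_ℝ := hT.inner_map_sq_le hE ht hint
    _ ≤ E * ∫ s in Ioi t, L s * μ.real S ^ 2 := by
        exact mul_le_mul_of_nonneg_left
          (setIntegral_mono_on hint (hLint.mul_const _) measurableSet_Ioi hbound) hE0
    _ = E * (∫ s in Ioi t, L s) * μ.real S ^ 2 := by rw [integral_mul_const, mul_assoc]

end Ultracontractivity

/-- The heat-kernel Sobolev–Orlicz inequality (Theorem 1.2).  The positive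
self-adjoint operator `A` restricted to `V = (ker A)^⊥` is encoded by the heat
semigroup `T t = e^{-tA} Π_V` and the spectral measures `ν g` of states `g`,
supported in `(0,∞)`, with `⟨T t g, g⟩ = ∫ e^{-tx} dν_g(x)` and energy
`E(g) = ∫ x dν_g(x)`.  Given `L(t) = ‖e^{-tA}Π_V‖_{1,∞}` finite and
`M(t) = ∫_t^∞ L(u) du < ∞`, every nonzero `f ∈ V` (full spectral mass
`ν f (ℝ) = ‖f‖²`) of finite energy satisfies
`∫_X N(|f(x)|²/(4E(f))) dμ ≤ ln 2`, where `N(y) = y / M⁻¹(y)` with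
`M⁻¹(y) = inf {t | M t ≤ y}`. -/
theorem stmt_8 (μ : Measure X)
    (T : ℝ → (Lp ℝ 2 μ →L[ℝ] Lp ℝ 2 μ))
    (hsemi : ∀ s t, 0 < s → 0 < t → T s ∘L T t = T (s + t))
    (hsymmT : ∀ t f g, ⟪T t f, g⟫_ℝ = ⟪f, T t g⟫_ℝ)
    (ν : Lp ℝ 2 μ → Measure ℝ)
    (hν0 : ∀ g, ν g (Set.Iic 0) = 0)
    (hν : ∀ g, ∀ t > (0 : ℝ), ENNReal.ofReal ⟪T t g, g⟫_ℝ
      = ∫⁻ x, ENNReal.ofReal (Real.exp (-t * x)) ∂(ν g))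
    (L M : ℝ → ℝ)
    (hL : ∀ t > (0 : ℝ), opNorm1infty μ (T t) = ENNReal.ofReal (L t))
    (hLint : ∀ t > (0 : ℝ), IntegrableOn L (Set.Ioi t))
    (hM : ∀ t > (0 : ℝ), M t = ∫ s in Set.Ioi t, L s)
    (Minv N : ℝ → ℝ)
    (hMinv : ∀ y, Minv y = sInf {t | 0 < t ∧ M t ≤ y})
    (hN : ∀ y, N y = y / Minv y)
    (f : Lp ℝ 2 μ) (hf : f ≠ 0)
    (hfV : ν f Set.univ = ENNReal.ofReal (‖f‖ ^ 2))
    (E : ℝ) (hEfin : Integrable (fun x => x) (ν f)) (hE : E = ∫ x, x ∂(ν f)) :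
    ∫⁻ x, ENNReal.ofReal (N ((f : X → ℝ) x ^ 2 / (4 * E))) ∂μ
      ≤ ENNReal.ofReal (Real.log 2) := by
  have hspec (g : Lp ℝ 2 μ) : IsSpectralMeasure T g (ν g) := ⟨hν0 g, hν g⟩
  have hT : IsHeatSemigroup T := ⟨hsemi, fun t _ => hsymmT t, fun g => ⟨ν g, hspec g⟩⟩
  have : IsFiniteMeasure (ν f) := ⟨hfV ▸ ENNReal.ofReal_lt_top⟩
  have hmass : (ν f).real univ = ‖f‖ ^ 2 := by
    rw [measureReal_def, hfV, ENNReal.toReal_ofReal (sq_nonneg _)]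
  have hνf : ν f ≠ 0 := fun h0 => hf (by simpa [h0] using hmass.symm)
  have hE0 : 0 < E := hE ▸ (hspec f).integral_id_pos hνf hEfin
  have hL0 (t : ℝ) (ht : t > 0) : 0 ≤ L t := by
    by_contra! hneg
    have hTt : T t = 0 := eq_zero_of_opNorm1infty_eq_zero
      ((hL t ht).trans (ENNReal.ofReal_of_nonpos hneg.le))
    exact (hspec f).map_ne_zero hνf ht (by simp [hTt])
  have hManti : AntitoneOn M (Ioi 0) :=
    (antitoneOn_integral_Ioi hL0 hLint).congr fun t ht => (hM t ht).symm
  have hTf (t : ℝ) (ht : t > 0) : ∀ᵐ x ∂μ, T (t / 2) f x ^ 2 ≤ E * M t := hM t ht ▸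
    hT.ae_map_half_sq_le (fun ε hε => hE ▸ (hspec f).inner_sub_map_self_le hT hmass hEfin hε)
      hL0 (fun s hs => (hL s hs).le) ht (hLint t ht)
  obtain rfl : Minv = generalizedInverse M := funext hMinv
  simp only [hN]
  refine (lintegral_sq_div_generalizedInverse_le f hE0 hManti hTf).trans_eq ?_
  rw [(hspec f).lintegral_norm_sub_map_half_sq_div_sq hT hmass hEfin, ← hE,
    ← ENNReal.ofReal_mul (inv_pos.2 hE0).le, inv_mul_cancel_left₀ hE0.ne']
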